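/- For any n ∈ ℕ, the set {x^{♯n} : x ∈ ℝ} ⊆ ℝ^n (words consisting of one real value repeated n times) is gap-rich with empty exceptional set. -/

import Mathlib

/-!
Shifting a word over the constant blocks by a constant gives another such word, so a word `x` may be
replaced by a concatenation of copies `x + s` with small `s`. Let `g s` be the transfer matrix of
`x + s` across one period, at the given energy `E`. Its entries are polynomials in `s` whose degrees
are known (`degree_polyM`): the trace has degree equal to the period, and so has the lower left
entry of the commutator `g s₁ * g s - g s * g s₁` for generic `s₁`. Hence there are arbitrarily small
`s₁`, `s₂` such that neither trace is `±2` and the two matrices do not commute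
(`exists_hyperbolic_list`).

If one of the two is hyperbolic, that shift of `x` has a gap at `E`. Otherwise both are elliptic and
do not commute, so their group commutator has trace greater than `2` (`trace_commutator_gt`). The
inverse of an elliptic matrix is a limit of its positive powers (`exists_pow_tendsto_adjugate`), so
some positive word in `g s₁` and `g s₂` is hyperbolic as well; it is the monodromy matrix of the
corresponding concatenation of copies of `x + s₁` and `x + s₂`.

Finally, a monodromy matrix of trace `τ` with `|τ| > 2` yields a gap (`not_mem_spectrum`). In the
ring of bounded operators on `ℓ²(ℤ)`, with `S` the translation and `L` the period, the
Cayley-Hamilton identity for the monodromy matrix shows that `τ - S^L - S^{-L}` lies in the left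
ideal generated by `H - E` (`disc_mem`). That element is invertible because `‖S^L + S^{-L}‖ ≤ 2`,
so `H - E` has a left inverse; being self-adjoint it also has a right inverse.
-/


open Set MeasureTheory BoundedContinuousFunction

noncomputable section

/-- ℓ²(ℤ; ℝ). -/
abbrev Ell2 : Type := lp (fun _ : ℤ => ℝ) 2

/-- Spectrum of the discrete Schrödinger operator `H_W = Δ + W` on `ℓ²(ℤ)`:
`E` lies in the spectrum iff `H_W - E` is not a linear bijection of `ℓ²(ℤ)`
(for bounded `W`, by the open mapping theorem this is equivalent to `H_W - E`
not being boundedly invertible). -/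
def SchrodingerSpectrum (W : ℤ → ℝ) : Set ℝ :=
  {E : ℝ | ¬ ∃ T : Ell2 ≃ₗ[ℝ] Ell2,
      ∀ f : Ell2, ∀ n : ℤ,
        (T f) n = f (n - 1) + f (n + 1) + (W n - E) * f n}

/-- A Cantor set of zero Hausdorff dimension: nonempty, compact, without isolated
points, with empty interior, and of Hausdorff dimension zero. -/
def IsZeroDimCantor (s : Set ℝ) : Prop :=
  s.Nonempty ∧ IsCompact s ∧ Preperfect s ∧ interior s = ∅ ∧ dimH s = 0

/-- Periodic bounded sequences. -/
def IsPeriodicSeq {α : Type*} [PseudoMetricSpace α] (W : ℤ →ᵇ α) : Prop :=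
  ∃ q : ℕ, 0 < q ∧ ∀ n : ℤ, W (n + q) = W n

/-- The limit-periodic functions `ℤ → ℝ`: uniform limits of periodic functions. -/
def LPZ : Set (ℤ →ᵇ ℝ) := closure {W : ℤ →ᵇ ℝ | IsPeriodicSeq W}

/-- A subset of ℝ is discrete if it has no accumulation points. -/
def IsDiscreteSet (S : Set ℝ) : Prop := ∀ x : ℝ, ¬ AccPt x (Filter.principal S)

/-- Periodic extension `w^{♯ℤ}` of a finite word `w`. -/
def perExt {α : Type*} [Zero α] {m : ℕ} (w : Fin m → α) : ℤ → α :=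
  fun n =>
    if h : 0 < m then
      w ⟨(n % (m : ℤ)).toNat, by
        have h1 : 0 ≤ n % (m : ℤ) := Int.emod_nonneg n (by exact_mod_cast h.ne')
        have h2 : n % (m : ℤ) < (m : ℤ) := Int.emod_lt_of_pos n (by exact_mod_cast h)
        omega⟩
    else 0

/-- Aggregation `y^♮` of a sequence of blocks in `ℝ^k` into a potential `ℤ → ℝ`. -/
def agg (k : ℕ) (x : ℤ → (Fin k → ℝ)) : ℤ → ℝ :=
  fun n =>
    if h : 0 < k then
      x (Int.fdiv n k) ⟨(n % (k : ℤ)).toNat, by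
        have h1 : 0 ≤ n % (k : ℤ) := Int.emod_nonneg n (by exact_mod_cast h.ne')
        have h2 : n % (k : ℤ) < (k : ℤ) := Int.emod_lt_of_pos n (by exact_mod_cast h)
        omega⟩
    else 0

/-- `Y ⊆ ℝ^k` is gap-rich with exceptional set `S`: `S` is discrete and near any
word over `Y` there is a word over `Y` whose periodic Schrödinger operator has a
gap at any prescribed energy `E ∉ S`. -/
def GapRich (k : ℕ) (Y : Set (Fin k → ℝ)) (S : Set ℝ) : Prop :=
  IsDiscreteSet S ∧
  ∀ E : ℝ, E ∉ S → ∀ m : ℕ, 0 < m → ∀ x : Fin m → (Fin k → ℝ), (∀ i, x i ∈ Y) →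
    ∀ ε : ℝ, 0 < ε →
      ∃ l : ℕ, 0 < l ∧ ∃ y : Fin l → (Fin k → ℝ),
        (∀ i, y i ∈ Y) ∧
        (∀ j : ℤ, dist (perExt x j) (perExt y j) < ε) ∧
        E ∉ SchrodingerSpectrum (agg k (perExt y))

/-- The periodic elements of `Y^ℤ`. -/
def PerY (k : ℕ) (Y : Set (Fin k → ℝ)) : Set (ℤ →ᵇ (Fin k → ℝ)) :=
  {x | IsPeriodicSeq x ∧ ∀ n : ℤ, x n ∈ Y}

/-- The limit-periodic elements of `Y^ℤ`: uniform limits of periodic elements. -/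
def LPY (k : ℕ) (Y : Set (Fin k → ℝ)) : Set (ℤ →ᵇ (Fin k → ℝ)) := closure (PerY k Y)

/-! ### Operators on `ℓ²(ℤ)` -/

lemma ell2_two_pos : 0 < (2 : ENNReal).toReal := by norm_num

lemma ell2_summable (f : Ell2) : Summable fun i => ‖f i‖ ^ (2 : ENNReal).toReal :=
  (memℓp_gen_iff ell2_two_pos).1 (lp.memℓp f)

lemma summable_comp_equiv (f : Ell2) (e : ℤ ≃ ℤ) :
    Summable fun i => ‖f (e i)‖ ^ (2 : ENNReal).toReal :=
  (ell2_summable f).comp_injective (i := e) e.injective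

lemma memℓp_comp_equiv (f : Ell2) (e : ℤ ≃ ℤ) : Memℓp (fun i => f (e i)) 2 :=
  memℓp_gen (summable_comp_equiv f e)

/-- The translation `(shiftOp k u) n = u (n + k)`, a surjective isometry of `ℓ²(ℤ)`. -/
def shiftOp (k : ℤ) : Ell2 ≃ₗᵢ[ℝ] Ell2 where
  toFun f := ⟨fun n => f (n + k), memℓp_comp_equiv f (Equiv.addRight k)⟩
  invFun f := ⟨fun n => f (n - k), memℓp_comp_equiv f (Equiv.subRight k)⟩
  map_add' f g := by ext n; rfl
  map_smul' c f := by ext n; rfl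
  left_inv f := by ext n; change f (n - k + k) = f n; simp
  right_inv f := by ext n; change f (n + k - k) = f n; simp
  norm_map' f := by
    rw [lp.norm_eq_tsum_rpow ell2_two_pos, lp.norm_eq_tsum_rpow ell2_two_pos]
    congr 1
    exact (Equiv.addRight k).tsum_eq (fun i => ‖f i‖ ^ (2 : ENNReal).toReal)

/-- The translation by `k` as an element of the ring of bounded operators. -/
def shiftL (k : ℤ) : Ell2 →L[ℝ] Ell2 := (shiftOp k : Ell2 →L[ℝ] Ell2)

@[simp] lemma shiftL_apply (k : ℤ) (f : Ell2) (n : ℤ) : shiftL k f n = f (n + k) := rfl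

lemma mul_memℓp (w : ℤ →ᵇ ℝ) (f : Ell2) : Memℓp (fun n => w n * f n) 2 := by
  refine memℓp_gen ?_
  refine Summable.of_nonneg_of_le (fun i => by positivity) (fun i => ?_)
    ((ell2_summable f).mul_left (‖w‖ ^ (2 : ENNReal).toReal))
  rw [norm_mul, Real.mul_rpow (norm_nonneg _) (norm_nonneg _)]
  gcongr
  exact w.norm_coe_le_norm i

/-- Multiplication by a bounded function, as a bounded operator on `ℓ²(ℤ)`. -/
def mulL (w : ℤ →ᵇ ℝ) : Ell2 →L[ℝ] Ell2 :=
  LinearMap.mkContinuous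
    { toFun := fun f => ⟨fun n => w n * f n, mul_memℓp w f⟩
      map_add' := fun f g => by ext n; exact mul_add _ _ _
      map_smul' := fun c f => by ext n; exact mul_left_comm _ _ _ } ‖w‖ (by
    intro f
    refine lp.norm_le_of_tsum_le ell2_two_pos (by positivity) ?_
    rw [Real.mul_rpow (norm_nonneg _) (norm_nonneg _), lp.norm_rpow_eq_tsum ell2_two_pos,
      ← tsum_mul_left]
    refine Summable.tsum_le_tsum (fun i => ?_)
      ((memℓp_gen_iff ell2_two_pos).1 (mul_memℓp w f)) ((ell2_summable f).mul_left _)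
    change ‖w i * f i‖ ^ _ ≤ _
    rw [norm_mul, Real.mul_rpow (norm_nonneg _) (norm_nonneg _)]
    gcongr
    exact w.norm_coe_le_norm i)

@[simp] lemma mulL_apply (w : ℤ →ᵇ ℝ) (f : Ell2) (n : ℤ) : mulL w f n = w n * f n := rfl

/-- The translate `n ↦ w (n + k)` of a bounded function. -/
def shiftB (k : ℤ) (w : ℤ →ᵇ ℝ) : ℤ →ᵇ ℝ :=
  w.compContinuous ⟨fun n => n + k, continuous_of_discreteTopology⟩

@[simp] lemma shiftB_apply (k : ℤ) (w : ℤ →ᵇ ℝ) (n : ℤ) : shiftB k w n = w (n + k) := rfl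

lemma op_ext {A B : Ell2 →L[ℝ] Ell2} (h : ∀ f n, A f n = B f n) : A = B := by
  ext f n; exact h f n

lemma shiftL_mul (j k : ℤ) : shiftL j * shiftL k = shiftL (j + k) :=
  op_ext fun f n => by simp [add_assoc]

lemma shiftL_zero : shiftL 0 = 1 := op_ext fun f n => by simp

lemma shiftL_mulL (k : ℤ) (w : ℤ →ᵇ ℝ) : shiftL k * mulL w = mulL (shiftB k w) * shiftL k :=
  op_ext fun f n => by simp

lemma mulL_mul (v w : ℤ →ᵇ ℝ) : mulL v * mulL w = mulL (v * w) :=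
  op_ext fun f n => by simp [mul_assoc]

lemma mulL_sub (v w : ℤ →ᵇ ℝ) : mulL (v - w) = mulL v - mulL w :=
  op_ext fun f n => by simp [sub_mul]

lemma mulL_zero : mulL 0 = 0 := op_ext fun f n => by simp

lemma mulL_one : mulL 1 = 1 := op_ext fun f n => by simp

lemma adjoint_shiftL (k : ℤ) : star (shiftL k) = shiftL (-k) := by
  rw [ContinuousLinearMap.star_eq_adjoint, shiftL, LinearIsometryEquiv.adjoint_eq_symm]
  refine op_ext fun f n => ?_
  rfl

lemma adjoint_mulL (w : ℤ →ᵇ ℝ) : star (mulL w) = mulL w := by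
  rw [ContinuousLinearMap.star_eq_adjoint, eq_comm, ContinuousLinearMap.eq_adjoint_iff]
  intro f g
  rw [lp.inner_eq_tsum, lp.inner_eq_tsum]
  refine tsum_congr fun i => ?_
  simp [mul_comm, mul_left_comm]

lemma norm_shiftL_le (k : ℤ) : ‖shiftL k‖ ≤ 1 :=
  ContinuousLinearMap.opNorm_le_bound _ zero_le_one fun f => by
    rw [one_mul]; exact ((shiftOp k).norm_map f).le

/-- `τ - S^L - S^{-L}` is invertible when `|τ| > 2`, since the translations have norm at most `1`. -/
lemma isUnit_free (τ : ℝ) (hτ : 2 < |τ|) (L : ℤ) :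
    IsUnit (algebraMap ℝ (Ell2 →L[ℝ] Ell2) τ - (shiftL L + shiftL (-L))) := by
  have h : τ ∈ resolventSet ℝ (shiftL L + shiftL (-L)) := by
    refine spectrum.mem_resolventSet_of_norm_lt_mul (lt_of_le_of_lt ?_ hτ)
    have h1 : ‖(1 : Ell2 →L[ℝ] Ell2)‖ ≤ 1 := ContinuousLinearMap.norm_id_le
    have h2 : ‖shiftL L + shiftL (-L)‖ ≤ 2 :=
      (norm_add_le _ _).trans (by linarith [norm_shiftL_le L, norm_shiftL_le (-L)])
    nlinarith [norm_nonneg (shiftL L + shiftL (-L)), norm_nonneg (1 : Ell2 →L[ℝ] Ell2)]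
  exact h

/-! ### Transfer matrices -/

/-- One-step transfer matrix, where `t` stands for `E - v`. -/
def stepM (t : ℝ) : Matrix (Fin 2) (Fin 2) ℝ := !![t, -1; 1, 0]

/-- The transfer matrix of the potential `E - t` across the sites `n, …, n + k - 1`. -/
def transM (t : ℤ → ℝ) (n : ℤ) : ℕ → Matrix (Fin 2) (Fin 2) ℝ
  | 0 => 1
  | k + 1 => stepM (t (n + k)) * transM t n k

lemma det_transM (t : ℤ → ℝ) (n : ℤ) (k : ℕ) : (transM t n k).det = 1 := by
  induction k with
  | zero => simp [transM]
  | succ k ih => rw [transM, Matrix.det_mul, ih]; simp [stepM]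

lemma transM_add (t : ℤ → ℝ) (n : ℤ) (j k : ℕ) :
    transM t n (j + k) = transM t (n + j) k * transM t n j := by
  induction k with
  | zero => simp [transM]
  | succ k ih =>
    rw [← add_assoc, transM, ih, transM, Matrix.mul_assoc]
    push_cast
    rw [add_assoc]

lemma transM_congr {t t' : ℤ → ℝ} {n n' : ℤ} {k : ℕ}
    (h : ∀ i : ℕ, i < k → t (n + i) = t' (n' + i)) : transM t n k = transM t' n' k := by
  induction k with
  | zero => rfl
  | succ k ih =>
    rw [transM, transM, ih fun i hi => h i (by omega), h k (by omega)]

/-- The monodromy matrices of a periodic potential at different base points are conjugate. -/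
lemma trace_transM_succ {t : ℤ → ℝ} {L : ℕ} (ht : ∀ n, t (n + L) = t n) (n : ℤ) :
    (transM t (n + 1) L).trace = (transM t n L).trace := by
  have h1 : transM t (n + 1) L * stepM (t n) = stepM (t n) * transM t n L := by
    have := transM_add t n 1 L
    rw [add_comm 1 L, transM, ht] at this
    simpa [transM] using this.symm
  have hd : stepM (t n) * (stepM (t n)).adjugate = 1 := by
    rw [Matrix.mul_adjugate]; simp [stepM, Matrix.det_fin_two]
  have hd' : (stepM (t n)).adjugate * stepM (t n) = 1 := by
    rw [Matrix.adjugate_mul]; simp [stepM, Matrix.det_fin_two]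
  calc (transM t (n + 1) L).trace
      = (transM t (n + 1) L * stepM (t n) * (stepM (t n)).adjugate).trace := by
        rw [Matrix.mul_assoc, hd, Matrix.mul_one]
    _ = (transM t n L).trace := by
        rw [h1, Matrix.trace_mul_comm, ← Matrix.mul_assoc, hd', Matrix.one_mul]

lemma trace_transM_const {t : ℤ → ℝ} {L : ℕ} (ht : ∀ n, t (n + L) = t n) (n : ℤ) :
    (transM t n L).trace = (transM t 0 L).trace := by
  induction n using Int.induction_on with
  | zero => rfl
  | succ i ih => rw [trace_transM_succ ht, ih]
  | pred i ih =>
    rw [← ih, ← trace_transM_succ ht]; simp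

/-! ### Hyperbolic monodromy implies a spectral gap -/

/-- The solution of `a (k+2) = v(· + k + 1) a (k+1) - a k` with prescribed `a 0`, `a 1`, where the
coefficients are bounded functions of the base point. -/
def solSeq (v a₀ a₁ : ℤ →ᵇ ℝ) : ℕ → (ℤ →ᵇ ℝ)
  | 0 => a₀
  | 1 => a₁
  | k + 2 => shiftB (k + 1) v * solSeq v a₀ a₁ (k + 1) - solSeq v a₀ a₁ k

lemma transM_eq_solSeq (v : ℤ →ᵇ ℝ) (n : ℤ) (k : ℕ) :
    transM v (n + 1) k = !![solSeq v 0 1 (k + 1) n, -solSeq v (-1) 0 (k + 1) n;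
      solSeq v 0 1 k n, -solSeq v (-1) 0 k n] := by
  induction k with
  | zero => ext i j; fin_cases i <;> fin_cases j <;> simp [transM, solSeq]
  | succ k ih =>
    rw [transM, ih]
    have : n + 1 + (k : ℤ) = n + (k + 1) := by ring
    ext i j
    fin_cases i <;> fin_cases j <;> simp [stepM, Matrix.mul_apply, solSeq, this] <;> ring

/-- Modulo the left ideal generated by `H - E`, every translation `S^k` is a combination of `S`
and `1` whose coefficients are entries of the transfer matrix. -/
lemma shift_mem (J : Ideal (Ell2 →L[ℝ] Ell2)) (v : ℤ →ᵇ ℝ)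
    (hJ : shiftL 1 + shiftL (-1) - mulL v ∈ J) (k : ℕ) :
    shiftL k - (mulL (solSeq v 0 1 k) * shiftL 1 - mulL (solSeq v (-1) 0 k)) ∈ J := by
  induction k using Nat.strong_induction_on with
  | _ k ih =>
  match k, ih with
  | 0, _ =>
    have : mulL (-1) = -1 := by
      have := mulL_sub 0 1
      rwa [zero_sub, mulL_zero, mulL_one, zero_sub] at this
    simp [solSeq, mulL_zero, this, shiftL_zero]
  | 1, _ => simp [solSeq, mulL_zero, mulL_one]
  | k + 2, ih =>
    have h1 := ih (k + 1) (by omega)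
    have h0 := ih k (by omega)
    have h2 := J.mul_mem_left (shiftL ((k : ℤ) + 1)) hJ
    have h3 := J.mul_mem_left (mulL (shiftB ((k : ℤ) + 1) v)) h1
    have h4 := J.sub_mem (J.add_mem h2 h3) h0
    convert h4 using 1
    rw [mul_sub, mul_add, shiftL_mul, shiftL_mul, shiftL_mulL]
    have e1 : (k : ℤ) + 1 + 1 = ((k + 2 : ℕ) : ℤ) := by push_cast; ring
    have e2 : (k : ℤ) + 1 + -1 = k := by ring
    rw [e1, e2]
    simp only [solSeq, mulL_sub, ← mulL_mul]
    push_cast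
    noncomm_ring

/-- The discriminant identity: for an `L`-periodic potential, `τ - S^L - S^{-L}` lies in the left
ideal generated by `H - E`, where `τ` is the trace of the monodromy matrix. -/
lemma disc_mem (J : Ideal (Ell2 →L[ℝ] Ell2)) (v : ℤ →ᵇ ℝ)
    (hJ : shiftL 1 + shiftL (-1) - mulL v ∈ J) (L : ℕ) (hv : ∀ n, v (n + L) = v n) :
    algebraMap ℝ (Ell2 →L[ℝ] Ell2) (transM v 0 L).trace - (shiftL L + shiftL (-L)) ∈ J := by
  have hper : ∀ a₀ a₁ : ℤ →ᵇ ℝ, shiftB (-L) a₀ = a₀ → shiftB (-L) a₁ = a₁ →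
      ∀ k, shiftB (-L) (solSeq v a₀ a₁ k) = solSeq v a₀ a₁ k := by
    intro a₀ a₁ h0 h1 k
    induction k using Nat.strong_induction_on with
    | _ k ih =>
    match k, ih with
    | 0, _ => exact h0
    | 1, _ => exact h1
    | k + 2, ih =>
      ext n
      have i1 := DFunLike.congr_fun (ih (k + 1) (by omega)) n
      have i0 := DFunLike.congr_fun (ih k (by omega)) n
      have i2 := hv (n + -L + (k + 1))
      rw [show n + -(L : ℤ) + (k + 1) + L = n + (k + 1) by ring] at i2
      simp only [shiftB_apply] at i1 i0
      simp [solSeq, i1, i0, i2]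
  have hz : shiftB (-L) 0 = 0 := by ext; simp
  have ho : shiftB (-L) 1 = 1 := by ext; simp
  have hm : shiftB (-L) (-1) = -1 := by ext; simp
  have ha := hper 0 1 hz ho
  have hb := hper (-1) 0 hm hz
  have hdet : solSeq v (-1) 0 (L + 1) * solSeq v 0 1 L - solSeq v 0 1 (L + 1) * solSeq v (-1) 0 L
      = 1 := by
    ext n
    have := det_transM v (n + 1) L
    rw [transM_eq_solSeq, Matrix.det_fin_two_of] at this
    simp only [BoundedContinuousFunction.coe_sub, BoundedContinuousFunction.coe_mul, Pi.sub_apply,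
      Pi.mul_apply, BoundedContinuousFunction.coe_one, Pi.one_apply]
    linarith
  have htr : mulL (solSeq v 0 1 (L + 1)) - mulL (solSeq v (-1) 0 L)
      = algebraMap ℝ (Ell2 →L[ℝ] Ell2) (transM v 0 L).trace := by
    rw [← mulL_sub]
    refine op_ext fun f n => ?_
    have := trace_transM_const hv (n + 1)
    rw [transM_eq_solSeq v n, Matrix.trace_fin_two_of] at this
    rw [← this, mulL_apply, Algebra.algebraMap_eq_smul_one]
    simp [← sub_eq_add_neg]
  have h0 := shift_mem J v hJ L
  have h1 := shift_mem J v hJ (L + 1)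
  set aL := solSeq v 0 1 L
  set aL1 := solSeq v 0 1 (L + 1)
  set bL := solSeq v (-1) 0 L
  set bL1 := solSeq v (-1) 0 (L + 1)
  have haL : shiftB (-L) aL = aL := ha L
  have hbL : shiftB (-L) bL = bL := hb L
  have haL1 : shiftB (-L) aL1 = aL1 := ha (L + 1)
  have hbL1 : shiftB (-L) bL1 = bL1 := hb (L + 1)
  have g0 := J.mul_mem_left (shiftL (-L)) h0
  have g1 := J.mul_mem_left (shiftL (-L)) h1
  rw [mul_sub, mul_sub, ← mul_assoc, shiftL_mulL, shiftL_mulL, shiftL_mul, mul_assoc,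
    shiftL_mul, haL, hbL, neg_add_cancel, shiftL_zero] at g0
  rw [mul_sub, mul_sub, ← mul_assoc, shiftL_mulL, shiftL_mulL, shiftL_mul, mul_assoc,
    shiftL_mul, haL1, hbL1, Nat.cast_add, Nat.cast_one, neg_add_cancel_left] at g1
  have g := J.sub_mem (J.sub_mem (J.mul_mem_left (mulL aL1) g0) (J.mul_mem_left (mulL aL) g1)) h0
  convert g using 1
  have c1 : mulL aL1 * mulL aL = mulL aL * mulL aL1 := by rw [mulL_mul, mulL_mul, mul_comm]
  have c2 : mulL aL * mulL bL1 - mulL aL1 * mulL bL = 1 := by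
    rw [mulL_mul, mulL_mul, ← mulL_sub, ← mulL_one, ← hdet, mul_comm aL]
  have c3 : shiftL (-L) = (mulL aL * mulL bL1 - mulL aL1 * mulL bL) * shiftL (-L) := by
    rw [c2, one_mul]
  conv_lhs => rw [← htr, c3]
  simp only [mul_sub, sub_mul, ← mul_assoc, c1, mul_one]
  abel

/-- A periodic potential whose monodromy matrix at energy `E` has trace outside `[-2, 2]` has `E`
outside its spectrum: `1` lies in the left ideal generated by the self-adjoint operator `H - E`,
so `H - E` has a left inverse, and by taking adjoints also a right inverse. -/
theorem not_mem_spectrum (V : ℤ → ℝ) (E : ℝ) (L : ℕ) (hL : 0 < L) (hV : ∀ n, V (n + L) = V n)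
    (htr : 2 < |(transM (fun i => E - V i) 0 L).trace|) : E ∉ SchrodingerSpectrum V := by
  have hmod : ∀ n : ℤ, V n = V (n % L) := by
    have hk : ∀ n k : ℤ, V (n + L * k) = V n := by
      intro n k
      induction k using Int.induction_on with
      | zero => simp
      | succ i ih => rw [← ih, ← hV (n + L * i)]; congr 1; ring
      | pred i ih => rw [← ih, ← hV (n + L * (-i - 1))]; congr 1; ring
    intro n
    conv_lhs => rw [← Int.emod_add_mul_ediv n L]
    exact hk _ _
  have hbd : ∀ n : ℤ, ‖E - V n‖ ≤ ∑ j ∈ Finset.range L, ‖E - V j‖ := by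
    intro n
    have h1 := Int.emod_nonneg n (b := L) (by omega)
    have h2 := Int.emod_lt_of_pos n (b := L) (by omega)
    obtain ⟨j, hj⟩ := Int.eq_ofNat_of_zero_le h1
    rw [hmod n, hj]
    exact Finset.single_le_sum (f := fun j : ℕ => ‖E - V j‖) (fun i _ => norm_nonneg _)
      (Finset.mem_range.2 (by omega))
  let v : ℤ →ᵇ ℝ := BoundedContinuousFunction.ofNormedAddCommGroupDiscrete _ _ hbd
  have hv : ∀ n, v n = E - V n := fun n => rfl
  set H : Ell2 →L[ℝ] Ell2 := shiftL 1 + shiftL (-1) - mulL v with hH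
  have hmem := disc_mem (Ideal.span {H}) v (Ideal.subset_span rfl) L (by
    intro n; rw [hv, hv, hV])
  obtain ⟨X, hX⟩ := Ideal.mem_span_singleton'.1 hmem
  obtain ⟨U, hU⟩ := isUnit_free _ htr L
  have hleft : (↑U⁻¹ * X) * H = 1 := by
    rw [mul_assoc, hX]
    change ↑U⁻¹ * (algebraMap ℝ _ (transM (fun i => E - V i) 0 L).trace - _) = (1 : Ell2 →L[ℝ] Ell2)
    rw [← hU, Units.inv_mul]
  have hstar : star H = H := by
    rw [hH, star_sub, star_add, adjoint_shiftL, adjoint_shiftL, adjoint_mulL, neg_neg, add_comm]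
  have hright : H * star (↑U⁻¹ * X) = 1 := by
    have := congrArg star hleft
    rwa [star_mul, hstar, star_one] at this
  have hbij : Function.Bijective (H : Ell2 →ₗ[ℝ] Ell2) := by
    constructor
    · intro f g hfg
      have := congrArg (fun z => (↑U⁻¹ * X : Ell2 →L[ℝ] Ell2) z) hfg
      change ((↑U⁻¹ * X) * H) f = ((↑U⁻¹ * X) * H) g at this
      rwa [hleft] at this
    · intro g
      refine ⟨(star (↑U⁻¹ * X)) g, ?_⟩
      change (H * star (↑U⁻¹ * X)) g = g
      rw [hright]; rfl
  intro hE
  refine hE ⟨LinearEquiv.ofBijective (H : Ell2 →ₗ[ℝ] Ell2) hbij, fun f n => ?_⟩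
  change H f n = _
  simp [hH, hv]
  rw [← sub_eq_add_neg]
  ring

/-! ### Elliptic matrices -/

/-- Two matrices that do not commute, the first of them elliptic, have a group commutator of trace
greater than `2`. Indeed `2 - tr (A B A⁻¹ B⁻¹) = det (A B - B A)`, and `A B - B A` is orthogonal
for the trace form of signature `(2, 1)` to the traceless part of `A`, which is timelike.
Non-commutation is expressed by `hne`, the lower left entry of `A B - B A` being nonzero. -/
lemma trace_commutator_gt {A B : Matrix (Fin 2) (Fin 2) ℝ} (hA : A.det = 1) (hB : B.det = 1)
    (htA : |A.trace| < 2)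
    (hne : A 1 0 * (B 0 0 - B 1 1) - B 1 0 * (A 0 0 - A 1 1) ≠ 0) :
    2 < (A * B * A.adjugate * B.adjugate).trace := by
  rw [Matrix.det_fin_two] at hA hB
  rw [Matrix.trace_fin_two, abs_lt] at htA
  rw [Matrix.trace_fin_two]
  simp only [Matrix.adjugate_fin_two, Matrix.mul_apply, Fin.sum_univ_two, Matrix.of_apply,
    Matrix.cons_val', Matrix.cons_val_zero, Matrix.cons_val_one, Matrix.cons_val_fin_one]
  generalize A 0 0 = p at *
  generalize A 0 1 = q at *
  generalize A 1 0 = r at *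
  generalize A 1 1 = s at *
  generalize B 0 0 = x at *
  generalize B 0 1 = y at *
  generalize B 1 0 = z at *
  generalize B 1 1 = w at *
  have hdisc : (p + s) ^ 2 < 4 := by nlinarith
  have hell : 0 < 4 - (p + s) ^ 2 := by linarith
  have hr : r ≠ 0 := by
    rintro rfl
    nlinarith [sq_nonneg (p - s)]
  -- the second factor is `-det (A B - B A)`; the diagonal entries of `A B - B A` are
  -- `±(q z - r y)` and its lower left entry is `r (x - w) - z (p - s)`
  have key : r ^ 2 * ((q * z - r * y) ^ 2 + (p * y + q * w - x * q - y * s) *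
      (r * (x - w) - z * (p - s))) > 0 := by
    have h4 : 4 * (r ^ 2 * ((q * z - r * y) ^ 2 + (p * y + q * w - x * q - y * s) *
      (r * (x - w) - z * (p - s)))) = (2 * r * (q * z - r * y) + (s - p) * (r * (x - w) - z * (p - s))) ^ 2
        + (4 * (p * s - q * r) - (p + s) ^ 2) * (r * (x - w) - z * (p - s)) ^ 2 := by ring
    have : 0 < (4 * (p * s - q * r) - (p + s) ^ 2) * (r * (x - w) - z * (p - s)) ^ 2 := by
      rw [hA]
      exact mul_pos (by linarith) ((sq_nonneg _).lt_of_ne (pow_ne_zero 2 hne).symm)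
    nlinarith [sq_nonneg (2 * r * (q * z - r * y) + (s - p) * (r * (x - w) - z * (p - s)))]
  have hpos := pos_of_mul_pos_right key (sq_nonneg r)
  have : p * s = 1 + q * r := by linarith
  have : x * w = 1 + y * z := by linarith
  have hid : ((p * x + q * z) * s + (p * y + q * w) * -r) * w + ((p * x + q * z) * -q + (p * y + q * w) * p) * -z
     + (((r * x + s * z) * s + (r * y + s * w) * -r) * -y + ((r * x + s * z) * -q + (r * y + s * w) * p) * x)
     - 2 * ((p * s - q * r) * (x * w - y * z)) = (q * z - r * y) ^ 2 + (p * y + q * w - x * q - y * s) *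
      (r * (x - w) - z * (p - s)) := by ring
  rw [hA, hB] at hid
  linarith

/-- Powers of an elliptic matrix come arbitrarily close to its inverse, because they stay in a
compact set. -/
lemma exists_pow_tendsto_adjugate {A : Matrix (Fin 2) (Fin 2) ℝ} (hA : A.det = 1)
    (htA : |A.trace| < 2) :
    ∃ e : ℕ → ℕ, Filter.Tendsto (fun j => A ^ e j) Filter.atTop (nhds A.adjugate) := by
  obtain ⟨h1, h2⟩ := abs_lt.1 htA
  set θ := Real.arccos (A.trace / 2) with hθ
  have hcos : Real.cos θ = A.trace / 2 := Real.cos_arccos (by linarith) (by linarith)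
  have hsin : 0 < Real.sin θ := by
    rw [hθ, Real.sin_arccos]
    apply Real.sqrt_pos.2
    nlinarith
  have hsq : A * A = A.trace • A - 1 := by
    rw [Matrix.det_fin_two] at hA
    ext i j
    fin_cases i <;> fin_cases j <;>
      simp [Matrix.mul_apply, Fin.sum_univ_two, Matrix.trace_fin_two] <;> linarith
  -- Cayley-Hamilton, with Chebyshev polynomials of the second kind as coefficients
  have hpow : ∀ k : ℕ, A ^ k = (Real.sin (k * θ) / Real.sin θ) • A
      - (Real.sin (k * θ - θ) / Real.sin θ) • (1 : Matrix (Fin 2) (Fin 2) ℝ) := by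
    intro k
    induction k with
    | zero => simp [Real.sin_neg, hsin.ne']
    | succ k ih =>
      have e1 : ((k + 1 : ℕ) : ℝ) * θ = k * θ + θ := by push_cast; ring
      have e2 : A.trace = 2 * Real.cos θ := by linarith
      rw [pow_succ, ih, sub_mul, smul_mul_assoc, smul_mul_assoc, one_mul, hsq, e1,
        add_sub_cancel_right, smul_sub, smul_smul, sub_right_comm, ← sub_smul]
      congr 2
      rw [e2, Real.sin_add, Real.sin_sub]
      field_simp
      ring
  have hbd : ∀ x : ℝ, Real.sin x / Real.sin θ ∈ Set.Icc (-(1 / Real.sin θ)) (1 / Real.sin θ) := by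
    intro x
    rw [← neg_div]
    exact ⟨by gcongr; exact Real.neg_one_le_sin x, by gcongr; exact Real.sin_le_one x⟩
  obtain ⟨⟨a, b⟩, -, φ, hφ, hlim⟩ := (isCompact_Icc.prod isCompact_Icc).tendsto_subseq
    (x := fun k : ℕ => (Real.sin (k * θ) / Real.sin θ, Real.sin (k * θ - θ) / Real.sin θ))
    (fun k => ⟨hbd _, hbd _⟩)
  have hcont : Continuous fun z : ℝ × ℝ => z.1 • A - z.2 • (1 : Matrix (Fin 2) (Fin 2) ℝ) := by
    fun_prop
  have hM : Filter.Tendsto (fun j => A ^ φ j) Filter.atTop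
      (nhds (a • A - b • (1 : Matrix (Fin 2) (Fin 2) ℝ))) := by
    refine ((hcont.tendsto (a, b)).comp hlim).congr fun j => ?_
    exact (hpow (φ j)).symm
  set M := a • A - b • (1 : Matrix (Fin 2) (Fin 2) ℝ)
  have hdet : M.det = 1 := by
    refine tendsto_nhds_unique (((continuous_id.matrix_det).tendsto M).comp hM) ?_
    refine tendsto_const_nhds.congr fun j => ?_
    simp [Matrix.det_pow, hA]
  have hadj : A.adjugate * A = 1 := by rw [Matrix.adjugate_mul, hA, one_smul]
  have hM1 := hM.comp (Filter.tendsto_add_atTop_nat 1)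
  have hM2 := ((continuous_id.matrix_adjugate).tendsto M).comp hM
  have hM3 := (tendsto_const_nhds (x := A.adjugate)).mul (hM1.mul hM2)
  refine ⟨fun j => φ (j + 1) - φ j - 1, ?_⟩
  have hlimit : A.adjugate * (M * id M.adjugate) = A.adjugate := by
    rw [id, Matrix.mul_adjugate, hdet, one_smul, mul_one]
  rw [← hlimit]
  refine hM3.congr fun j => ?_
  have hlt : φ j < φ (j + 1) := hφ (Nat.lt_succ_self j)
  have hsplit : φ (j + 1) = 1 + (φ (j + 1) - φ j - 1) + φ j := by omega
  have hinv : A ^ φ j * (A ^ φ j).adjugate = 1 := by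
    rw [Matrix.mul_adjugate, Matrix.det_pow, hA, one_pow, one_smul]
  simp only [Function.comp, id]
  conv_lhs => rw [hsplit]
  rw [pow_add, mul_assoc (A ^ _), hinv, mul_one, pow_add, pow_one, ← mul_assoc, hadj, one_mul]

/-- The semigroup generated by two non-commuting elliptic matrices contains a hyperbolic one;
`hne` again says that the lower left entry of `A B - B A` is nonzero. -/
lemma exists_hyperbolic_word {A B : Matrix (Fin 2) (Fin 2) ℝ} (hA : A.det = 1) (hB : B.det = 1)
    (htA : |A.trace| < 2) (htB : |B.trace| < 2)
    (hne : A 1 0 * (B 0 0 - B 1 1) - B 1 0 * (A 0 0 - A 1 1) ≠ 0) :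
    ∃ i j : ℕ, 2 < (A * B * A ^ i * B ^ j).trace := by
  obtain ⟨e, he⟩ := exists_pow_tendsto_adjugate hA htA
  obtain ⟨f, hf⟩ := exists_pow_tendsto_adjugate hB htB
  have h := ((tendsto_const_nhds (x := A * B)).mul he).mul hf
  have h' := ((continuous_id.matrix_trace).tendsto _).comp h
  obtain ⟨j, hj⟩ := (h'.eventually (lt_mem_nhds (trace_commutator_gt hA hB htA hne))).exists
  exact ⟨e j, f j, hj⟩

/-! ### Uniform shifts of a periodic potential -/

open Polynomial in
/-- The transfer matrix across the sites `0, …, k - 1`, as a matrix of polynomials in a constant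
`X` added to the potential. -/
def polyM (c : ℤ → ℝ) : ℕ → Matrix (Fin 2) (Fin 2) ℝ[X]
  | 0 => 1
  | k + 1 => !![Polynomial.C (c k) - X, -1; 1, 0] * polyM c k

open Polynomial in
lemma eval_polyM (c : ℤ → ℝ) (s : ℝ) (k : ℕ) (i j : Fin 2) :
    (polyM c k i j).eval s = transM (fun n => c n - s) 0 k i j := by
  induction k generalizing i j with
  | zero => fin_cases i <;> fin_cases j <;> simp [polyM, transM]
  | succ k ih =>
    have h0 := ih 0 j
    have h1 := ih 1 j
    rw [polyM, transM]
    fin_cases i <;> simp [Matrix.mul_apply, Fin.sum_univ_two, stepM, h0, h1]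

open Polynomial in
lemma degree_polyM (c : ℤ → ℝ) (k : ℕ) :
    (polyM c k 0 0).degree = k ∧ (polyM c k 1 0).degree < k ∧ (polyM c k 0 1).degree < k ∧
      (polyM c k 1 1).degree ≤ (k - 1 : ℕ) := by
  induction k with
  | zero => simp [polyM]
  | succ k ih =>
    obtain ⟨h00, h10, h01, h11⟩ := ih
    have e00 : polyM c (k + 1) 0 0 = (Polynomial.C (c k) - X) * polyM c k 0 0 - polyM c k 1 0 := by
      simp [polyM, Matrix.mul_apply, Fin.sum_univ_two, sub_eq_add_neg]
    have e10 : polyM c (k + 1) 1 0 = polyM c k 0 0 := by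
      simp [polyM, Matrix.mul_apply, Fin.sum_univ_two]
    have e01 : polyM c (k + 1) 0 1 = (Polynomial.C (c k) - X) * polyM c k 0 1 - polyM c k 1 1 := by
      simp [polyM, Matrix.mul_apply, Fin.sum_univ_two, sub_eq_add_neg]
    have e11 : polyM c (k + 1) 1 1 = polyM c k 0 1 := by
      simp [polyM, Matrix.mul_apply, Fin.sum_univ_two]
    have hlin : (Polynomial.C (c k) - X : ℝ[X]).degree = 1 := by
      rw [← neg_sub, degree_neg, degree_X_sub_C]
    have hlt : ((k : ℕ) : WithBot ℕ) < ((k + 1 : ℕ) : WithBot ℕ) := by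
      exact_mod_cast Nat.lt_succ_self k
    have hk1 : ((1 : WithBot ℕ) + (k : ℕ)) = ((k + 1 : ℕ) : WithBot ℕ) := by
      rw [add_comm]; norm_cast
    refine ⟨?_, ?_, ?_, ?_⟩
    · rw [e00, degree_sub_eq_left_of_degree_lt, degree_mul, hlin, h00, hk1]
      rw [degree_mul, hlin, h00, hk1]
      exact h10.trans hlt
    · rw [e10, h00]; exact hlt
    · rw [e01]
      refine (degree_sub_le _ _).trans_lt (max_lt ?_ ?_)
      · rw [degree_mul, hlin]
        by_cases hz : polyM c k 0 1 = 0
        · rw [hz, degree_zero]; exact WithBot.bot_lt_coe _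
        · rw [degree_eq_natDegree hz] at h01 ⊢
          have : (polyM c k 0 1).natDegree < k := by exact_mod_cast h01
          rw [add_comm]
          exact_mod_cast Nat.succ_lt_succ this
      · refine h11.trans_lt ?_
        exact_mod_cast (by omega : k - 1 < k + 1)
    · rw [e11]; exact h01.le

open Polynomial in
lemma exists_small_ne_zero {F : ℝ[X]} (hF : F ≠ 0) {ε : ℝ} (hε : 0 < ε) :
    ∃ s : ℝ, |s| < ε ∧ F.eval s ≠ 0 := by
  by_contra! h
  refine hF (eq_zero_of_infinite_isRoot F ((Set.Ioo_infinite hε).mono fun s hs => ?_))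
  exact h s (abs_lt.2 ⟨by linarith [hs.1], hs.2⟩)

open Polynomial in
/-- Arbitrarily small uniform shifts `s` of the potential suffice to make some product of the
resulting transfer matrices across `0, …, p - 1` hyperbolic. The trace is a polynomial of degree
`p` in `s`, so it avoids `±2` for generic `s`; the lower left entry of the commutator of the
matrices at `s₁` and `s` also has degree `p` in `s`, so generic shifts give matrices that do not
commute. -/
lemma exists_hyperbolic_list (c : ℤ → ℝ) (p : ℕ) (hp : 0 < p) {ε : ℝ} (hε : 0 < ε) :
    ∃ w : List ℝ, 0 < w.length ∧ (∀ s ∈ w, |s| < ε) ∧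
      2 < |((w.map fun s => transM (fun n => c n - s) 0 p).prod).trace| := by
  obtain ⟨h00, h10, -, h11⟩ := degree_polyM c p
  have hne10 : polyM c p 1 0 ≠ 0 := by
    obtain ⟨k, rfl⟩ : ∃ k, p = k + 1 := ⟨p - 1, by omega⟩
    have e10 : polyM c (k + 1) 1 0 = polyM c k 0 0 := by
      simp [polyM, Matrix.mul_apply, Fin.sum_univ_two]
    rw [e10]
    intro h
    have := (degree_polyM c k).1
    rw [h, degree_zero] at this
    exact WithBot.bot_ne_coe this
  have h11' : (polyM c p 1 1).degree < p := by
    refine h11.trans_lt ?_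
    exact_mod_cast (by omega : p - 1 < p)
  have hdeg0 : ((0 : ℕ) : WithBot ℕ) < (p : ℕ) := by exact_mod_cast hp
  have htr : ∀ a : ℝ, polyM c p 0 0 + polyM c p 1 1 - Polynomial.C a ≠ 0 := by
    intro a h
    have h1 : (polyM c p 0 0 + polyM c p 1 1).degree = p := by
      rw [degree_add_eq_left_of_degree_lt (by rwa [h00]), h00]
    rw [sub_eq_zero] at h
    rw [h] at h1
    exact absurd (h1 ▸ degree_C_le (a := a)) (not_le.2 hdeg0)
  have hdisc : (polyM c p 0 0 + polyM c p 1 1 - Polynomial.C 2) *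
      (polyM c p 0 0 + polyM c p 1 1 - Polynomial.C (-2)) ≠ 0 :=
    mul_ne_zero (htr 2) (htr (-2))
  obtain ⟨g, hg⟩ : ∃ g : ℝ → Matrix (Fin 2) (Fin 2) ℝ,
      g = fun s => transM (fun n => c n - s) 0 p := ⟨_, rfl⟩
  have hgdet : ∀ s, (g s).det = 1 := fun s => by rw [hg]; exact det_transM _ _ _
  rw [← hg]
  have heval : ∀ s i j, (polyM c p i j).eval s = g s i j := fun s i j => by
    rw [hg]; exact eval_polyM c s p i j
  have hne2 : ∀ s, ((polyM c p 0 0 + polyM c p 1 1 - Polynomial.C 2) *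
      (polyM c p 0 0 + polyM c p 1 1 - Polynomial.C (-2))).eval s ≠ 0 →
      2 < |(g s).trace| ∨ |(g s).trace| < 2 := by
    intro s hs
    simp only [eval_mul, eval_sub, eval_add, eval_C, heval] at hs
    rw [← Matrix.trace_fin_two] at hs
    rcases lt_trichotomy |(g s).trace| 2 with h | h | h
    · exact Or.inr h
    · exfalso
      rcases abs_eq (by norm_num : (0 : ℝ) ≤ 2) |>.1 h with h | h <;> rw [h] at hs <;> norm_num at hs
    · exact Or.inl h
  obtain ⟨s₁, hs₁, hF₁⟩ := exists_small_ne_zero (mul_ne_zero hdisc hne10) hε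
  rw [eval_mul] at hF₁
  have hr : g s₁ 1 0 ≠ 0 := by rw [← heval]; exact right_ne_zero_of_mul hF₁
  rcases hne2 s₁ (left_ne_zero_of_mul hF₁) with h | ht₁
  · exact ⟨[s₁], by simp, by simpa using hs₁, by simpa using h⟩
  -- the lower left entry of the commutator of `g s₁` and `g X`, which has degree `p` in `X`
  have hcomm : Polynomial.C (g s₁ 1 0) * (polyM c p 0 0 - polyM c p 1 1) -
      Polynomial.C (g s₁ 0 0 - g s₁ 1 1) * polyM c p 1 0 ≠ 0 := by
    intro h
    have h1 : (Polynomial.C (g s₁ 1 0) * (polyM c p 0 0 - polyM c p 1 1)).degree = p := by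
      rw [degree_C_mul hr, degree_sub_eq_left_of_degree_lt (by rwa [h00]), h00]
    rw [sub_eq_zero] at h
    rw [h] at h1
    refine absurd h1 (ne_of_lt (lt_of_le_of_lt ?_ h10))
    rw [degree_mul]
    calc _ ≤ 0 + (polyM c p 1 0).degree := by gcongr; exact degree_C_le
      _ = _ := zero_add _
  obtain ⟨s₂, hs₂, hF₂⟩ := exists_small_ne_zero (mul_ne_zero hdisc hcomm) hε
  rw [eval_mul] at hF₂
  rcases hne2 s₂ (left_ne_zero_of_mul hF₂) with h | ht₂
  · exact ⟨[s₂], by simp, by simpa using hs₂, by simpa using h⟩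
  have hnc := right_ne_zero_of_mul hF₂
  simp only [eval_sub, eval_mul, eval_C, heval] at hnc
  obtain ⟨i, j, hij⟩ := exists_hyperbolic_word (hgdet s₁) (hgdet s₂) ht₁ ht₂
    (by rwa [mul_comm (g s₁ 0 0 - g s₁ 1 1)] at hnc)
  refine ⟨[s₁, s₂] ++ List.replicate i s₁ ++ List.replicate j s₂, by simp, ?_, ?_⟩
  · intro s hs
    simp only [List.mem_append, List.mem_cons, List.mem_replicate, List.not_mem_nil, or_false] at hs
    rcases hs with ((rfl | rfl) | ⟨-, rfl⟩) | ⟨-, rfl⟩ <;> assumption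
  · refine lt_of_lt_of_le hij ?_
    simp only [List.map_append, List.map_replicate, List.prod_append, List.prod_replicate,
      List.map_cons, List.map_nil, List.prod_cons, List.prod_nil, mul_one]
    exact le_abs_self _

/-! ### Concatenation of shifted copies of a word -/

/-- Some sequence of shifts turns the transfer matrix across `w.length` periods into the product of
the monodromy matrices listed by `w`. -/
lemma exists_shift_seq (c : ℤ → ℝ) (p : ℕ) (w : List ℝ) :
    ∃ s : ℕ → ℝ, (∀ b < w.length, s b ∈ w) ∧
      ∀ t : ℤ → ℝ, (∀ b < w.length, ∀ r : ℕ, r < p → t ((b * p + r : ℕ) : ℤ) = c r - s b) →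
        transM t 0 (w.length * p) = (w.map fun s => transM (fun n => c n - s) 0 p).prod := by
  induction w with
  | nil => exact ⟨fun _ => 0, by simp, by simp [transM]⟩
  | cons a w ih =>
    obtain ⟨s, hs, hprod⟩ := ih
    refine ⟨Function.update s w.length a, ?_, ?_⟩
    · intro b hb
      rcases eq_or_ne b w.length with rfl | hne
      · simp
      · rw [Function.update_of_ne hne]
        rw [List.length_cons] at hb
        exact List.mem_cons_of_mem _ (hs b (by omega))
    · intro t ht
      rw [List.length_cons] at ht ⊢
      rw [add_mul, one_mul, transM_add, List.map_cons, List.prod_cons, hprod t]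
      · congr 1
        refine transM_congr fun r hr => ?_
        have := ht w.length (by omega) r hr
        rw [Function.update_self] at this
        simpa using this
      · intro b hb r hr
        rw [ht b (by omega) r hr, Function.update_of_ne hb.ne]

lemma perExt_apply {α : Type*} [Zero α] {m : ℕ} (hm : 0 < m) (w : Fin m → α) (j : ℤ) (i : Fin m)
    (hi : (i : ℤ) = j % m) : perExt w j = w i := by
  rw [perExt, dif_pos hm]
  congr 1
  ext
  simp only
  omega

lemma agg_apply {k : ℕ} (hk : 0 < k) (x : ℤ → (Fin k → ℝ)) (j : ℤ) (i : Fin k)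
    (hi : (i : ℤ) = j % k) : agg k x j = x (j / k) i := by
  rw [agg, dif_pos hk, Int.fdiv_eq_ediv_of_nonneg _ (by positivity)]
  congr 1
  ext
  simp only
  omega

lemma exists_fin_emod {k : ℕ} (hk : 0 < k) (j : ℤ) : ∃ i : Fin k, (i : ℤ) = j % k := by
  have h1 := Int.emod_nonneg j (b := k) (by omega)
  have h2 := Int.emod_lt_of_pos j (b := k) (by omega)
  exact ⟨⟨(j % k).toNat, by omega⟩, by simp only; omega⟩

lemma perExt_add_period {α : Type*} [Zero α] {m : ℕ} (hm : 0 < m) (w : Fin m → α) (j : ℤ) :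
    perExt w (j + m) = perExt w j := by
  obtain ⟨i, hi⟩ := exists_fin_emod hm j
  rw [perExt_apply hm w j i hi, perExt_apply hm w (j + m) i (by simpa using hi)]

lemma agg_add_period {k m : ℕ} (hk : 0 < k) (hm : 0 < m) (w : Fin m → (Fin k → ℝ)) (j : ℤ) :
    agg k (perExt w) (j + (m * k : ℕ)) = agg k (perExt w) j := by
  obtain ⟨i, hi⟩ := exists_fin_emod hk j
  rw [agg_apply hk _ j i hi, agg_apply hk _ (j + (m * k : ℕ)) i (by simpa using hi)]
  push_cast
  rw [Int.add_mul_ediv_right _ _ (by omega), perExt_add_period hm]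

/-- The word obtained by concatenating the copies `x + s 0, …, x + s (K - 1)` of `x`. -/
def shiftedWord {k m : ℕ} (hm : 0 < m) (K : ℕ) (x : Fin m → (Fin k → ℝ)) (s : ℕ → ℝ) :
    Fin (K * m) → (Fin k → ℝ) :=
  fun i a => x ⟨i % m, Nat.mod_lt _ hm⟩ a + s (i / m)

lemma perExt_shiftedWord {k m K : ℕ} (hm : 0 < m) (hK : 0 < K) (x : Fin m → (Fin k → ℝ))
    (s : ℕ → ℝ) (j : ℤ) : ∃ b < K, (b : ℤ) = j % (K * m : ℕ) / m ∧
      ∀ a, perExt (shiftedWord hm K x s) j a = perExt x j a + s b := by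
  have hKm : 0 < K * m := by positivity
  obtain ⟨i, hi⟩ := exists_fin_emod hKm j
  refine ⟨i / m, Nat.div_lt_of_lt_mul (i.2.trans_eq (mul_comm _ _)), by rw [← hi]; simp, fun a => ?_⟩
  rw [perExt_apply hKm _ j i hi, perExt_apply hm x j ⟨i % m, Nat.mod_lt _ hm⟩, shiftedWord]
  push_cast
  rw [hi]
  push_cast
  rw [Int.emod_emod_of_dvd _ (Dvd.intro_left _ rfl)]

/-- For any `n ∈ ℕ`, the set `{x^{♯n} : x ∈ ℝ} ⊆ ℝ^n` of constant words is
gap-rich with empty exceptional set. -/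
theorem const_word_gapRich (n : ℕ) (hn : 0 < n) :
    GapRich n {z : Fin n → ℝ | ∃ c : ℝ, ∀ i, z i = c} (∅ : Set ℝ) := by
  refine ⟨fun x h => ?_, ?_⟩
  · rw [accPt_iff_nhds] at h
    obtain ⟨y, hy, -⟩ := h Set.univ Filter.univ_mem
    exact hy.2
  intro E _ m hm x hx ε hε
  set W := agg n (perExt x) with hW
  have hp : 0 < m * n := by positivity
  obtain ⟨w, hw0, hwε, hwtr⟩ := exists_hyperbolic_list (fun i => E - W i) (m * n) hp hε
  obtain ⟨s, hs, hprod⟩ := exists_shift_seq (fun i => E - W i) (m * n) w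
  set K := w.length with hK
  have hKm : 0 < K * m := by positivity
  refine ⟨K * m, hKm, shiftedWord hm K x s, ?_, ?_, ?_⟩
  · intro i
    obtain ⟨c, hc⟩ := hx ⟨i % m, Nat.mod_lt _ hm⟩
    exact ⟨c + s (i / m), fun a => by rw [shiftedWord, hc]⟩
  · intro j
    obtain ⟨b, hb, -, hj⟩ := perExt_shiftedWord hm hw0 x s j
    rw [dist_pi_lt_iff hε]
    intro a
    rw [hj, Real.dist_eq, sub_add_cancel_left, abs_neg]
    exact hwε _ (hs b hb)
  · refine not_mem_spectrum _ E (K * m * n) (by positivity) (agg_add_period hn hKm _) ?_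
    rw [mul_assoc, hprod]
    · exact hwtr
    · intro b hb r hr
      obtain ⟨i, hi⟩ := exists_fin_emod hn ((b * (m * n) + r : ℕ) : ℤ)
      obtain ⟨b', -, hb', hj⟩ := perExt_shiftedWord hm hw0 x s (((b * (m * n) + r : ℕ) : ℤ) / n)
      have hdiv : ((b * (m * n) + r : ℕ) : ℤ) / n = ((r / n + b * m : ℕ) : ℤ) := by
        rw [← Int.natCast_ediv]
        congr 1
        rw [← mul_assoc, add_comm, Nat.add_mul_div_right _ _ hn]
      have hrn : r / n < m := Nat.div_lt_of_lt_mul (by rwa [mul_comm])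
      have hlt : r / n + b * m < K * m := by nlinarith
      have hbb : b' = b := by
        rw [hdiv, ← Int.natCast_emod, Nat.mod_eq_of_lt hlt, ← Int.natCast_ediv,
          Nat.add_mul_div_right _ _ hm, Nat.div_eq_of_lt hrn, zero_add] at hb'
        exact_mod_cast hb'
      have hWper : W ((b * (m * n) + r : ℕ) : ℤ) = W r := by
        clear hi hj hb' hdiv hlt hbb
        clear hb
        induction b with
        | zero => simp
        | succ b ih =>
          rw [← ih, hW, ← agg_add_period hn hm x ((b * (m * n) + r : ℕ) : ℤ)]
          congr 1
          push_cast; ring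
      rw [agg_apply hn _ _ i hi, hj, hbb, ← agg_apply hn (perExt x) _ i hi, ← hW, hWper]
      ring
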